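/- arXiv:0908.2277 — 3 statements merged into one kernel-verified Lean document; each statement's English description precedes it below -/
import Mathlib

section
/- Lemma 1, lower bound: For every integer N_t ≥ 2 and every real B ≥ 0, setting n = 2^B and B̄ = B/N_t, the quantity E[ν] := 1 − n·Beta(n, N_t/(N_t−1)) satisfies E[ν] ≥ 1 − 2^{−B̄}; equivalently, n·Beta(n, 1 + 1/(N_t−1)) ≤ 2^{−B̄}. -/
/-- The Euler Beta function `Beta(x,y) = ∫₀¹ t^{x-1} (1-t)^{y-1} dt`. -/
noncomputable def Beta (x y : ℝ) : ℝ := ∫ t in (0:ℝ)..1, t ^ (x - 1) * (1 - t) ^ (y - 1)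

/-!
`Beta x` is log-convex on the positive reals, so for `0 ≤ a ≤ 1` the value `Beta n (1 + a)` is at
most the geometric interpolation of `Beta n 1 = 1 / n` and `Beta n 2 = 1 / (n * (n + 1))`, which
gives `n * Beta n (1 + a) ≤ (n + 1) ^ (-a)`. Since `Beta n` is antitone, it is enough to bound
`n * Beta n (1 + 1 / N)`, and `a = 1 / N` gives `(n + 1) ^ (-1 / N) ≤ n ^ (-1 / N)`.
-/

open Set

section Beta

variable {x y z a b : ℝ}

lemma ofReal_Beta (x y : ℝ) : (Beta x y : ℂ) = Complex.betaIntegral x y := by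
  rw [Beta, Complex.betaIntegral, ← intervalIntegral.integral_ofReal]
  refine intervalIntegral.integral_congr fun t ht ↦ ?_
  rw [uIcc_of_le zero_le_one] at ht
  push_cast [Complex.ofReal_cpow ht.1, Complex.ofReal_cpow (sub_nonneg.2 ht.2)]
  rfl

lemma Beta_eq_Gamma_mul_div (hx : 0 < x) (hy : 0 < y) :
    Beta x y = Real.Gamma x * Real.Gamma y / Real.Gamma (x + y) := by
  change _ = ProbabilityTheory.beta x y
  rw [ProbabilityTheory.beta_eq_betaIntegralReal x y hx hy, ← ofReal_Beta, Complex.ofReal_re]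

lemma Beta_pos (hx : 0 < x) (hy : 0 < y) : 0 < Beta x y := by
  rw [Beta_eq_Gamma_mul_div hx hy]
  exact ProbabilityTheory.beta_pos hx hy

lemma Beta_one_right (hx : 0 < x) : Beta x 1 = x⁻¹ := by
  have hΓ := (Real.Gamma_pos_of_pos hx).ne'
  rw [Beta_eq_Gamma_mul_div hx one_pos, Real.Gamma_one, Real.Gamma_add_one hx.ne']
  field_simp

lemma Beta_add_one_right (hx : 0 < x) (hy : 0 < y) :
    Beta x (y + 1) = y / (x + y) * Beta x y := by
  have hxy : 0 < x + y := add_pos hx hy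
  have hΓ := (Real.Gamma_pos_of_pos hxy).ne'
  rw [Beta_eq_Gamma_mul_div hx (by positivity), Beta_eq_Gamma_mul_div hx hy, ← add_assoc,
    Real.Gamma_add_one hy.ne', Real.Gamma_add_one hxy.ne']
  field_simp

-- A non-integrable integrand would give `Beta x y` the junk value `0`, against `Beta_pos`.
lemma intervalIntegrable_Beta_integrand (hx : 0 < x) (hy : 0 < y) :
    IntervalIntegrable (fun t : ℝ ↦ t ^ (x - 1) * (1 - t) ^ (y - 1)) MeasureTheory.volume 0 1 :=
  intervalIntegral.intervalIntegrable_of_integral_ne_zero (Beta_pos hx hy).ne'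

lemma antitoneOn_Beta_right (hx : 0 < x) : AntitoneOn (Beta x) (Ioi 0) := by
  intro y hy z hz hyz
  refine intervalIntegral.integral_mono_on_of_le_Ioo zero_le_one
    (intervalIntegrable_Beta_integrand hx hz) (intervalIntegrable_Beta_integrand hx hy)
    fun t ⟨ht₀, ht₁⟩ ↦ mul_le_mul_of_nonneg_left ?_ (by positivity)
  exact Real.rpow_le_rpow_of_exponent_ge (by linarith) (by linarith) (by linarith)

lemma Beta_integrand_mul_add_mul {t : ℝ} (ht : t ∈ Ioo (0 : ℝ) 1) (hab : a + b = 1) :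
    t ^ (x - 1) * (1 - t) ^ (a * y + b * z - 1) =
      (t ^ (x - 1) * (1 - t) ^ (y - 1)) ^ a * (t ^ (x - 1) * (1 - t) ^ (z - 1)) ^ b := by
  have ht₀ : 0 < t := ht.1
  have ht₁ : 0 < 1 - t := sub_pos.2 ht.2
  have hpow_left : t ^ (x - 1) = (t ^ (x - 1)) ^ a * (t ^ (x - 1)) ^ b := by
    rw [← Real.rpow_add (by positivity), hab, Real.rpow_one]
  have hpow_right :
      (1 - t) ^ (a * y + b * z - 1) = ((1 - t) ^ (y - 1)) ^ a * ((1 - t) ^ (z - 1)) ^ b := by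
    rw [← Real.rpow_mul ht₁.le, ← Real.rpow_mul ht₁.le, ← Real.rpow_add ht₁]
    congr 1
    linear_combination hab
  rw [Real.mul_rpow (by positivity) (by positivity), Real.mul_rpow (by positivity) (by positivity),
    hpow_right]
  nth_rewrite 1 [hpow_left]
  ring

lemma rpow_mul_rpow_le_mul_add_div {f g u v : ℝ} (hf : 0 ≤ f) (hg : 0 ≤ g) (hu : 0 < u)
    (hv : 0 < v) (ha : 0 ≤ a) (hb : 0 ≤ b) (hab : a + b = 1) :
    f ^ a * g ^ b ≤ u ^ a * v ^ b * (a / u * f + b / v * g) := by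
  calc f ^ a * g ^ b = u ^ a * v ^ b * ((f / u) ^ a * (g / v) ^ b) := by
        rw [Real.div_rpow hf hu.le, Real.div_rpow hg hv.le]
        field_simp
    _ ≤ u ^ a * v ^ b * (a * (f / u) + b * (g / v)) := by
        gcongr
        exact Real.geom_mean_le_arith_mean2_weighted ha hb (by positivity) (by positivity) hab
    _ = u ^ a * v ^ b * (a / u * f + b / v * g) := by ring

lemma Beta_mul_add_mul_le_rpow_Beta_mul_rpow_Beta (hx : 0 < x) (hy : 0 < y) (hz : 0 < z)
    (ha : 0 ≤ a) (hb : 0 ≤ b) (hab : a + b = 1) :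
    Beta x (a * y + b * z) ≤ Beta x y ^ a * Beta x z ^ b := by
  have hu : 0 < Beta x y := Beta_pos hx hy
  have hv : 0 < Beta x z := Beta_pos hx hz
  have hyz : 0 < a * y + b * z := convex_Ioi (0 : ℝ) hy hz ha hb hab
  have hf := (intervalIntegrable_Beta_integrand hx hy).const_mul (a / Beta x y)
  have hg := (intervalIntegrable_Beta_integrand hx hz).const_mul (b / Beta x z)
  calc Beta x (a * y + b * z)
      ≤ ∫ t in (0:ℝ)..1, Beta x y ^ a * Beta x z ^ b *
          (a / Beta x y * (t ^ (x - 1) * (1 - t) ^ (y - 1)) +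
            b / Beta x z * (t ^ (x - 1) * (1 - t) ^ (z - 1))) := by
        refine intervalIntegral.integral_mono_on_of_le_Ioo zero_le_one
          (intervalIntegrable_Beta_integrand hx hyz) ((hf.add hg).const_mul _) fun t ht ↦ ?_
        have ht₀ : 0 < t := ht.1
        have ht₁ : 0 < 1 - t := sub_pos.2 ht.2
        rw [Beta_integrand_mul_add_mul ht hab]
        exact rpow_mul_rpow_le_mul_add_div (by positivity) (by positivity) hu hv ha hb hab
    _ = Beta x y ^ a * Beta x z ^ b * (a / Beta x y * Beta x y + b / Beta x z * Beta x z) := by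
        rw [intervalIntegral.integral_const_mul, intervalIntegral.integral_add hf hg,
          intervalIntegral.integral_const_mul, intervalIntegral.integral_const_mul, ← Beta, ← Beta]
    _ = Beta x y ^ a * Beta x z ^ b := by
        rw [div_mul_cancel₀ _ hu.ne', div_mul_cancel₀ _ hv.ne', hab, mul_one]

lemma mul_Beta_one_add_le_rpow_neg (hx : 0 < x) (ha₀ : 0 ≤ a) (ha₁ : a ≤ 1) :
    x * Beta x (1 + a) ≤ (x + 1) ^ (-a) := by
  have hBeta_two : Beta x 2 = x⁻¹ * (x + 1)⁻¹ := by
    rw [← one_add_one_eq_two, Beta_add_one_right hx one_pos, Beta_one_right hx]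
    ring
  calc x * Beta x (1 + a) = x * Beta x ((1 - a) * 1 + a * 2) := by ring_nf
    _ ≤ x * (Beta x 1 ^ (1 - a) * Beta x 2 ^ a) := by
        gcongr
        exact Beta_mul_add_mul_le_rpow_Beta_mul_rpow_Beta hx one_pos two_pos
          (sub_nonneg.2 ha₁) ha₀ (sub_add_cancel 1 a)
    _ = x * (x⁻¹ ^ (1 - a) * x⁻¹ ^ a) * (x + 1)⁻¹ ^ a := by
        rw [Beta_one_right hx, hBeta_two, Real.mul_rpow (by positivity) (by positivity)]
        ring
    _ = (x + 1) ^ (-a) := by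
        rw [← Real.rpow_add (by positivity), sub_add_cancel, Real.rpow_one,
          mul_inv_cancel₀ hx.ne', one_mul, Real.inv_rpow (by positivity),
          Real.rpow_neg (by positivity)]

lemma mul_Beta_one_add_one_div_sub_one_le_rpow {N : ℝ} (hx : 0 < x) (hN : 1 < N) :
    x * Beta x (1 + 1 / (N - 1)) ≤ x ^ (-(1 / N)) := by
  have hN₀ : 0 < N := one_pos.trans hN
  have hN₁ : 0 < N - 1 := sub_pos.2 hN
  calc x * Beta x (1 + 1 / (N - 1)) ≤ x * Beta x (1 + 1 / N) := by
        have hexp : 1 + 1 / N ≤ 1 + 1 / (N - 1) :=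
          add_le_add le_rfl (one_div_le_one_div_of_le hN₁ (sub_le_self N zero_le_one))
        gcongr
        exact antitoneOn_Beta_right hx (mem_Ioi.2 (by positivity)) (mem_Ioi.2 (by positivity)) hexp
    _ ≤ (x + 1) ^ (-(1 / N)) :=
        mul_Beta_one_add_le_rpow_neg hx (by positivity) ((div_le_one hN₀).2 hN.le)
    _ ≤ x ^ (-(1 / N)) :=
        Real.rpow_le_rpow_of_nonpos hx (le_add_of_nonneg_right zero_le_one)
          (neg_nonpos.2 (by positivity))

end Beta

theorem rvq_mean_lower_bound_general (Nt : ℝ) (hNt : 1 < Nt) (B : ℝ) :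
    1 - (2:ℝ) ^ B * Beta ((2:ℝ) ^ B) (Nt / (Nt - 1)) ≥ 1 - (2:ℝ) ^ (-(B / Nt)) ∧
    (2:ℝ) ^ B * Beta ((2:ℝ) ^ B) (1 + 1 / (Nt - 1)) ≤ (2:ℝ) ^ (-(B / Nt)) := by
  have hexp : Nt / (Nt - 1) = 1 + 1 / (Nt - 1) := by
    rw [one_add_div (sub_pos.2 hNt).ne', sub_add_cancel]
  have hbound : (2:ℝ) ^ B * Beta ((2:ℝ) ^ B) (1 + 1 / (Nt - 1)) ≤ (2:ℝ) ^ (-(B / Nt)) := by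
    have hpow : (2:ℝ) ^ (-(B / Nt)) = ((2:ℝ) ^ B) ^ (-(1 / Nt)) := by
      rw [← Real.rpow_mul zero_le_two, mul_neg, mul_one_div]
    rw [hpow]
    exact mul_Beta_one_add_one_div_sub_one_le_rpow (by positivity) hNt
  rw [hexp]
  exact ⟨sub_le_sub_left hbound 1, hbound⟩

/-- Lemma 1, lower bound: for `N_t ≥ 2` and `B ≥ 0`, with `n = 2^B` and `B̄ = B/N_t`,
`E[ν] = 1 − n·Beta(n, N_t/(N_t−1))` satisfies `E[ν] ≥ 1 − 2^{−B̄}`; equivalently,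
`n·Beta(n, 1 + 1/(N_t−1)) ≤ 2^{−B̄}`. -/
theorem rvq_mean_lower_bound (Nt : ℕ) (hNt : 2 ≤ Nt) (B : ℝ) (hB : 0 ≤ B) :
    1 - (2:ℝ) ^ B * Beta ((2:ℝ) ^ B) ((Nt : ℝ) / ((Nt : ℝ) - 1)) ≥
      1 - (2:ℝ) ^ (-(B / (Nt : ℝ))) ∧
    (2:ℝ) ^ B * Beta ((2:ℝ) ^ B) (1 + 1 / ((Nt : ℝ) - 1)) ≤ (2:ℝ) ^ (-(B / (Nt : ℝ))) :=
  rvq_mean_lower_bound_general Nt (Nat.one_lt_cast.2 hNt) B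
end

section
/- Asymptotics of the optimized capacity lower bound (proof of Theorem 2): Fix reals ρ > 0, L̄ > 0, μ > 0. For each integer N_t ≥ 2 define on the compact set K = {(T̄, B̄) : T̄ ≥ 0, B̄ ≥ 0, T̄ + μ·B̄ ≤ L̄} the function G_{N_t}(T̄, B̄) = ((L̄ − T̄ − μ·B̄)/L̄)·(1 − d(N_t, B̄))·log(1 + ρ·((1 − σ_w²(T̄))/(1 + ρ·σ_w²(T̄)))·(1 − 2^{−B̄})·N_t), where σ_w²(T̄) = 1 − T̄/(1 + ρ^{−1}) if T̄ < 1 and σ_w²(T̄) = 1/(1 + ρ·T̄) if T̄ ≥ 1, and d(N_t, B̄) = (1/2)·√( 1/N_t + (1 + 1/N_t)·(Γ(1 + 2/(N_t−1)) − Γ(1 + 1/(N_t−1))²·(1 + 2^{−B̄·N_t})^{−2/(N_t−1)}) / (2^{B̄ + B̄/(N_t−1)} − Γ(1 + 1/(N_t−1)))² ). Then G_{N_t} attains a maximum on K, any choice of maximizers (T̄°(N_t), B̄°(N_t)) satisfies T̄°(N_t)·log N_t → L̄ and B̄°(N_t)·log N_t → L̄/μ as N_t → ∞, and the maximum value M(N_t)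 satisfies M(N_t) − log(ρ·N_t) + 2·log log N_t → log(L̄²·log 2) − log(μ·(1 + ρ^{−1})) − 2 − log(1 + ρ). -/
open Filter Real

/-- MMSE channel-estimation error variance `σ_w²` as a function of the normalized training
length `T̄`, for SNR `ρ` (eq. (21) of the paper). -/
noncomputable def sigmaW2 (ρ Tbar : ℝ) : ℝ :=
  if Tbar < 1 then 1 - Tbar / (1 + ρ⁻¹) else 1 / (1 + ρ * Tbar)

/-- The feasible set of normalized training/feedback pairs `(T̄, B̄)`:
`T̄ ≥ 0`, `B̄ ≥ 0`, `T̄ + μ·B̄ ≤ L̄`. -/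
def feasible (μ L : ℝ) : Set (ℝ × ℝ) :=
  {p | 0 ≤ p.1 ∧ 0 ≤ p.2 ∧ p.1 + μ * p.2 ≤ L}

/-- The deficiency term `d(N_t, B̄)` of Lemma 2 (eq. (28) of the paper). -/
noncomputable def dTerm (Nt : ℕ) (Bbar : ℝ) : ℝ :=
  (1 / 2) * Real.sqrt (1 / (Nt : ℝ) + (1 + 1 / (Nt : ℝ)) *
    (Real.Gamma (1 + 2 / ((Nt : ℝ) - 1)) -
        (Real.Gamma (1 + 1 / ((Nt : ℝ) - 1))) ^ 2 *
          (1 + (2:ℝ) ^ (-(Bbar * (Nt : ℝ)))) ^ (-(2 / ((Nt : ℝ) - 1)))) /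
    ((2:ℝ) ^ (Bbar + Bbar / ((Nt : ℝ) - 1)) - Real.Gamma (1 + 1 / ((Nt : ℝ) - 1))) ^ 2)

/-- The normalized lower bound `G_{N_t}(T̄, B̄)` on MISO beamforming capacity with
normalized training `T̄`, normalized feedback `B̄`, coherence time `L̄`, conversion factor `μ`,
and SNR `ρ` (Theorem 1 of the paper combined with the MMSE estimation error formula). -/
noncomputable def capLB (ρ L μ : ℝ) (Nt : ℕ) (p : ℝ × ℝ) : ℝ :=
  ((L - p.1 - μ * p.2) / L) * (1 - dTerm Nt p.2) *
    Real.log (1 + ρ * ((1 - sigmaW2 ρ p.1) / (1 + ρ * sigmaW2 ρ p.1)) *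
      (1 - (2:ℝ) ^ (-p.2)) * (Nt : ℝ))

/-!
Training and feedback of order `1 / log N` are optimal. If `log N • (T, B)` tends to `(t, b)`, the
rate without its deficiency factor `1 - d`, after subtracting `log (ρ N) - 2 log log N` and
exponentiating, tends to `κ t b exp (-(t + μ b) / L)`. Since `x exp (-x) ≤ exp (-1)` with equality
only at `x = 1`, the limit is maximal exactly at `(L, L / μ)`, and its exponential decay keeps the
rescaled maximizers in a compact set. The factor `1 - d` only lowers the rate, and
`d = o(1 / log N)` at `B = c / log N`, so it changes neither the maximizers nor the value in the
limit.

At `B = 0` the function `d` need not be continuous: for `N = 2` its denominator vanishes there,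
because `Γ(2) = 1`. The rate also vanishes at `B = 0`, so it is upper semicontinuous even there,
which is enough for a maximum to exist.
-/

section Limits

variable {ι : Type*} {l : Filter ι}

lemma tendsto_nhds_of_unique_maximizer {X Y : Type*} [TopologicalSpace X] [TopologicalSpace Y]
    [Preorder Y] [OrderClosedTopology Y] {K : Set X} {J : X → Y} {u : ι → X} {g h : ι → Y} {z : X}
    (hK : IsCompact K) (hu : ∀ᶠ i in l, u i ∈ K) (hz : ∀ y ∈ K, J z ≤ J y → y = z)
    (hg : ∀ U : Ultrafilter ι, ↑U ≤ l → ∀ y ∈ K, Tendsto u U (nhds y) → Tendsto g U (nhds (J y)))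
    (hh : Tendsto h l (nhds (J z))) (hle : h ≤ᶠ[l] g) :
    Tendsto u l (nhds z) := by
  refine hK.tendsto_nhds_of_unique_mapClusterPt hu fun y hyK hy => hz y hyK ?_
  obtain ⟨U, hUl, hUy⟩ := mapClusterPt_iff_ultrafilter.1 hy
  exact le_of_tendsto_of_tendsto (hh.mono_left hUl) (hg U hUl y hyK hUy) (hUl hle)

lemma tendsto_zero_of_tendsto_mul {r x : ι → ℝ} {t : ℝ} (hr : Tendsto r l atTop)
    (hrx : Tendsto (fun i => r i * x i) l (nhds t)) : Tendsto x l (nhds 0) := by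
  refine (hrx.div_atTop hr).congr' ?_
  filter_upwards [hr.eventually_ne_atTop 0] with i hi
  field_simp

lemma tendsto_mul_of_hasDerivAt_zero {φ : ℝ → ℝ} {φ' t : ℝ} {r x : ι → ℝ} (hφ : HasDerivAt φ φ' 0)
    (hφ0 : φ 0 = 0) (hr : Tendsto r l atTop) (hrx : Tendsto (fun i => r i * x i) l (nhds t)) :
    Tendsto (fun i => r i * φ (x i)) l (nhds (φ' * t)) := by
  have := hφ.hasFDerivAt.hasFDerivWithinAt (s := Set.univ) |>.lim
    (tendsto_zero_of_tendsto_mul hr hrx) (by simp) hrx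
  simpa [hφ0, mul_comm] using this

lemma log_natCast_pos {N : ℕ} (hN : 2 ≤ N) : 0 < log (N : ℝ) :=
  log_pos (by exact_mod_cast hN)

lemma tendsto_log_natCast_atTop : Tendsto (fun N : ℕ => log N) atTop atTop :=
  tendsto_log_atTop.comp tendsto_natCast_atTop_atTop

lemma tendsto_log_natCast_pow_div_add (a : ℝ) (k : ℕ) :
    Tendsto (fun N : ℕ => log N ^ k / (N + a)) atTop (nhds 0) := by
  simpa [Function.comp_def] using
    (tendsto_pow_log_div_mul_add_atTop 1 a k one_ne_zero).comp tendsto_natCast_atTop_atTop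

end Limits

section ExpGamma

lemma mul_exp_neg_lt_exp_neg_one {x : ℝ} (hx : x ≠ 1) : x * exp (-x) < exp (-1) := by
  have h : x < exp (x - 1) := by simpa using add_one_lt_exp (sub_ne_zero.2 hx)
  calc x * exp (-x) < exp (x - 1) * exp (-x) := by gcongr
    _ = exp (-1) := by rw [← exp_add]; ring_nf

lemma eq_one_of_exp_neg_one_sq_le {x y : ℝ} (hx : 0 ≤ x)
    (h : exp (-1) ^ 2 ≤ x * exp (-x) * (y * exp (-y))) : x = 1 := by
  by_contra hne
  refine h.not_gt ?_
  calc x * exp (-x) * (y * exp (-y)) ≤ x * exp (-x) * exp (-1) := by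
        gcongr
        exact mul_exp_neg_le_exp_neg_one y
    _ < exp (-1) * exp (-1) := by
        gcongr
        exact mul_exp_neg_lt_exp_neg_one hne
    _ = exp (-1) ^ 2 := (sq _).symm

lemma tendsto_one_add_mul_sq_mul_exp_neg_div (C : ℝ) {a : ℝ} (ha : 0 < a) :
    Tendsto (fun u => (1 + C * u ^ 2) * exp (-(u / a))) atTop (nhds 0) := by
  have hpow (k : ℕ) := (tendsto_pow_mul_exp_neg_atTop_nhds_zero k).comp
    (tendsto_id.atTop_div_const ha)
  refine (((hpow 0).add ((hpow 2).const_mul (C * a ^ 2))).congr fun u => ?_).trans (by simp)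
  simp only [Function.comp_apply, id]
  field_simp

lemma one_add_mul_log_two_le_two_rpow (x : ℝ) : 1 + x * log 2 ≤ 2 ^ x := by
  have := add_one_le_exp (log 2 * x)
  rw [rpow_def_of_pos two_pos]
  linarith

lemma two_rpow_neg_le_one {x : ℝ} (hx : 0 ≤ x) : (2 : ℝ) ^ (-x) ≤ 1 :=
  rpow_le_one_of_one_le_of_nonpos one_le_two (neg_nonpos.2 hx)

lemma Gamma_one_add_le_one {x : ℝ} (hx₀ : 0 ≤ x) (hx₁ : x ≤ 1) : Gamma (1 + x) ≤ 1 := by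
  have h := convexOn_Gamma.2 (Set.mem_Ioi.2 one_pos) (Set.mem_Ioi.2 two_pos)
    (sub_nonneg.2 hx₁) hx₀ (by ring)
  simp only [smul_eq_mul, Gamma_one, Gamma_two] at h
  ring_nf at h ⊢
  exact h

end ExpGamma

section Rate

variable {ρ L μ : ℝ}

/-- The fraction `(1 - σ_w²) / (1 + ρ σ_w²)` of the SNR that survives channel estimation with
normalized training length `T`. -/
noncomputable def trainingGain (ρ T : ℝ) : ℝ :=
  (1 - sigmaW2 ρ T) / (1 + ρ * sigmaW2 ρ T)

/-- The joint effect on the SNR of training (`p.1`) and of quantized feedback (`p.2`). -/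
noncomputable def linkGain (ρ : ℝ) (p : ℝ × ℝ) : ℝ :=
  trainingGain ρ p.1 * (1 - 2 ^ (-p.2))

/-- The rate `capLB` with its deficiency factor `1 - d` replaced by `1`. -/
noncomputable def idealRate (ρ L μ : ℝ) (N : ℕ) (p : ℝ × ℝ) : ℝ :=
  (L - p.1 - μ * p.2) / L * log (1 + ρ * linkGain ρ p * N)

lemma capLB_eq_mul_idealRate (N : ℕ) (p : ℝ × ℝ) :
    capLB ρ L μ N p = (1 - dTerm N p.2) * idealRate ρ L μ N p := by
  unfold capLB idealRate linkGain trainingGain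
  ring_nf

lemma nonneg_of_mem_feasible {p : ℝ × ℝ} (hp : p ∈ feasible μ L) : 0 ≤ p :=
  ⟨hp.1, hp.2.1⟩

lemma isCompact_feasible (hμ : 0 < μ) : IsCompact (feasible μ L) := by
  have hclosed : IsClosed (feasible μ L) :=
    (isClosed_le continuous_const continuous_fst).inter <|
      (isClosed_le continuous_const continuous_snd).inter <|
        isClosed_le (by fun_prop : Continuous fun p : ℝ × ℝ => p.1 + μ * p.2) continuous_const
  refine (isCompact_Icc (a := (0 : ℝ × ℝ)) (b := (L, L / μ))).of_isClosed_subset hclosed ?_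
  rintro ⟨T, B⟩ ⟨hT, hB, hTB⟩
  dsimp only at hT hB hTB
  have : 0 ≤ μ * B := by positivity
  exact ⟨⟨hT, hB⟩, by linarith, (le_div_iff₀ hμ).2 (by linarith)⟩

lemma continuous_sigmaW2 (hρ : 0 < ρ) : Continuous (sigmaW2 ρ) := by
  have hcont : Continuous fun T : ℝ =>
      if 1 ≤ T then 1 / (1 + ρ * T) else 1 - T / (1 + ρ⁻¹) := by
    refine continuous_if_le continuous_const continuous_id ?_ (by fun_prop) ?_
    · refine continuousOn_const.div (by fun_prop) fun T (hT : 1 ≤ T) => ?_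
      positivity
    · rintro T rfl
      field_simp
      ring
  refine hcont.congr fun T => ?_
  simp only [sigmaW2, ← not_le, ite_not]

lemma sigmaW2_nonneg (hρ : 0 < ρ) {T : ℝ} (hT : 0 ≤ T) : 0 ≤ sigmaW2 ρ T := by
  unfold sigmaW2
  split_ifs with h
  · rw [sub_nonneg, div_le_one (by positivity)]
    have : 0 < ρ⁻¹ := by positivity
    linarith
  · positivity

lemma sigmaW2_le_one (hρ : 0 < ρ) {T : ℝ} (hT : 0 ≤ T) : sigmaW2 ρ T ≤ 1 := by
  unfold sigmaW2
  split_ifs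
  · exact sub_le_self _ (by positivity)
  · exact div_le_one_of_le₀ (by nlinarith) (by positivity)

lemma one_sub_sigmaW2_le (hρ : 0 < ρ) {T : ℝ} (hT : 0 ≤ T) : 1 - sigmaW2 ρ T ≤ ρ * T := by
  unfold sigmaW2
  split_ifs
  · rw [sub_sub_cancel, div_le_iff₀ (by positivity)]
    have : ρ * T * (1 + ρ⁻¹) = ρ * T + T := by field_simp
    nlinarith [mul_nonneg hρ.le hT]
  · have : 1 - 1 / (1 + ρ * T) = ρ * T / (1 + ρ * T) := by field_simp; ring
    rw [this]
    exact div_le_self (by positivity) (by nlinarith)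

lemma trainingGain_nonneg (hρ : 0 < ρ) {T : ℝ} (hT : 0 ≤ T) : 0 ≤ trainingGain ρ T := by
  have := sigmaW2_nonneg hρ hT
  exact div_nonneg (sub_nonneg.2 (sigmaW2_le_one hρ hT)) (by positivity)

lemma trainingGain_le (hρ : 0 < ρ) {T : ℝ} (hT : 0 ≤ T) : trainingGain ρ T ≤ ρ * T := by
  have : 0 ≤ ρ * sigmaW2 ρ T := mul_nonneg hρ.le (sigmaW2_nonneg hρ hT)
  exact (div_le_self (sub_nonneg.2 (sigmaW2_le_one hρ hT)) (by linarith)).trans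
    (one_sub_sigmaW2_le hρ hT)

lemma trainingGain_zero : trainingGain ρ 0 = 0 := by
  simp [trainingGain, sigmaW2]

lemma hasDerivAt_trainingGain_zero (hρ : 0 < ρ) :
    HasDerivAt (trainingGain ρ) (((1 + ρ⁻¹) * (1 + ρ))⁻¹) 0 := by
  have hσ : HasDerivAt (sigmaW2 ρ) (-(1 / (1 + ρ⁻¹))) 0 := by
    refine (((hasDerivAt_id (0 : ℝ)).div_const (1 + ρ⁻¹)).const_sub 1).congr_of_eventuallyEq ?_
    filter_upwards [Iio_mem_nhds one_pos] with T hT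
    exact if_pos hT
  have hσ₀ : sigmaW2 ρ 0 = 1 := by simp [sigmaW2]
  refine ((hσ.const_sub 1).div ((hσ.const_mul ρ).const_add 1)
    (by rw [hσ₀]; positivity)).congr_deriv ?_
  rw [hσ₀]
  field_simp
  ring

lemma linkGain_nonneg (hρ : 0 < ρ) {p : ℝ × ℝ} (hp : 0 ≤ p) : 0 ≤ linkGain ρ p :=
  mul_nonneg (trainingGain_nonneg hρ hp.1) (sub_nonneg.2 (two_rpow_neg_le_one hp.2))

lemma linkGain_le (hρ : 0 < ρ) {p : ℝ × ℝ} (hp : 0 ≤ p) :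
    linkGain ρ p ≤ ρ * log 2 * (p.1 * p.2) := by
  have hB : 1 - (2 : ℝ) ^ (-p.2) ≤ p.2 * log 2 := by
    linarith [one_add_mul_log_two_le_two_rpow (-p.2)]
  calc linkGain ρ p ≤ ρ * p.1 * (p.2 * log 2) :=
        mul_le_mul (trainingGain_le hρ hp.1) hB (sub_nonneg.2 (two_rpow_neg_le_one hp.2))
          (mul_nonneg hρ.le hp.1)
    _ = ρ * log 2 * (p.1 * p.2) := by ring

lemma one_le_one_add_linkGain (hρ : 0 < ρ) (N : ℕ) {p : ℝ × ℝ} (hp : 0 ≤ p) :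
    1 ≤ 1 + ρ * linkGain ρ p * N := by
  have := linkGain_nonneg hρ hp
  exact le_add_of_nonneg_right (by positivity)

lemma continuousOn_idealRate (hρ : 0 < ρ) (N : ℕ) :
    ContinuousOn (idealRate ρ L μ N) (Set.Ici 0) := by
  have hσ : Continuous fun p : ℝ × ℝ => sigmaW2 ρ p.1 :=
    (continuous_sigmaW2 hρ).comp continuous_fst
  have hgain : ContinuousOn (fun p : ℝ × ℝ => trainingGain ρ p.1) (Set.Ici 0) := by
    refine (continuous_const.sub hσ).continuousOn.div
      (continuous_const.add (continuous_const.mul hσ)).continuousOn fun p hp => ?_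
    have := sigmaW2_nonneg hρ (Set.mem_Ici.1 hp).1
    positivity
  have hpow : Continuous fun p : ℝ × ℝ => (2 : ℝ) ^ (-p.2) :=
    (continuous_const_rpow two_ne_zero).comp (by fun_prop)
  have hlink : ContinuousOn (linkGain ρ) (Set.Ici 0) :=
    hgain.mul (continuous_const.sub hpow).continuousOn
  refine ContinuousOn.mul (by fun_prop) (ContinuousOn.log (by fun_prop) fun p hp => ?_)
  exact (one_pos.trans_le (one_le_one_add_linkGain hρ N hp)).ne'

lemma idealRate_nonneg (hρ : 0 < ρ) (hL : 0 < L) (N : ℕ) {p : ℝ × ℝ}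
    (hp : p ∈ feasible μ L) : 0 ≤ idealRate ρ L μ N p :=
  mul_nonneg (div_nonneg (by linarith [hp.2.2]) hL.le)
    (log_nonneg (one_le_one_add_linkGain hρ N (nonneg_of_mem_feasible hp)))

lemma idealRate_eq_zero {p : ℝ × ℝ} (N : ℕ) (hp : p.2 = 0) : idealRate ρ L μ N p = 0 := by
  simp [idealRate, linkGain, hp]

end Rate

section Deficiency

lemma dTerm_nonneg (N : ℕ) (B : ℝ) : 0 ≤ dTerm N B := by
  unfold dTerm
  positivity

/-- Dominates the numerator of the fraction in `dTerm N B`, uniformly in `B ≥ 0`, when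
`x = 1 / (N - 1)`. -/
noncomputable def gammaGap (x : ℝ) : ℝ :=
  Gamma (1 + 2 * x) - Gamma (1 + x) ^ 2 * 2 ^ (-(2 * x))

lemma gammaGap_zero : gammaGap 0 = 0 := by
  simp [gammaGap]

lemma differentiableAt_gammaGap_zero : DifferentiableAt ℝ gammaGap 0 := by
  have hΓ (c : ℝ) : DifferentiableAt ℝ (fun x => Gamma (1 + c * x)) 0 := by
    refine DifferentiableAt.comp (g := Gamma) 0 (differentiableAt_Gamma fun m => ?_) (by fun_prop)
    rw [mul_zero, add_zero]
    linarith [m.cast_nonneg (α := ℝ)]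
  have hpow : DifferentiableAt ℝ (fun x : ℝ => (2 : ℝ) ^ (-(2 * x))) 0 :=
    (((hasDerivAt_id (0 : ℝ)).const_mul 2).neg.const_rpow two_pos).differentiableAt
  have hΓ₁ : DifferentiableAt ℝ (fun x => Gamma (1 + x)) 0 := by simpa using hΓ 1
  exact (hΓ 2).sub ((hΓ₁.pow 2).mul hpow)

lemma mul_log_two_le_two_rpow_sub_Gamma {N : ℕ} (hN : 2 ≤ N) {B : ℝ} (hB : 0 ≤ B) :
    B * log 2 ≤ 2 ^ (B + B / ((N : ℝ) - 1)) - Gamma (1 + 1 / ((N : ℝ) - 1)) := by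
  have hN' : (1 : ℝ) ≤ N - 1 := by linarith [(Nat.ofNat_le_cast (α := ℝ)).2 hN]
  have hΓ : Gamma (1 + 1 / ((N : ℝ) - 1)) ≤ 1 :=
    Gamma_one_add_le_one (by positivity) (div_le_one_of_le₀ hN' (by positivity))
  have hpow : (2 : ℝ) ^ B ≤ 2 ^ (B + B / ((N : ℝ) - 1)) :=
    rpow_le_rpow_of_exponent_le one_le_two (le_add_of_nonneg_right (by positivity))
  linarith [one_add_mul_log_two_le_two_rpow B]

lemma continuousAt_dTerm {N : ℕ} (hN : 2 ≤ N) {B : ℝ} (hB : 0 < B) :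
    ContinuousAt (dTerm N) B := by
  have hpow {g : ℝ → ℝ} (hg : Continuous g) : Continuous fun B => (2 : ℝ) ^ g B :=
    (continuous_const_rpow two_ne_zero).comp hg
  have hrpow : Continuous fun B : ℝ => (1 + (2 : ℝ) ^ (-(B * N))) ^ (-(2 / ((N : ℝ) - 1))) :=
    (continuous_const.add (hpow (by fun_prop))).rpow_const fun B =>
      Or.inl (by positivity : 0 < 1 + (2 : ℝ) ^ (-(B * N))).ne'
  have hden : Continuous fun B : ℝ =>
      ((2 : ℝ) ^ (B + B / ((N : ℝ) - 1)) - Gamma (1 + 1 / ((N : ℝ) - 1))) ^ 2 :=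
    ((hpow (by fun_prop)).sub continuous_const).pow 2
  have hden_pos : 0 < (2 : ℝ) ^ (B + B / ((N : ℝ) - 1)) - Gamma (1 + 1 / ((N : ℝ) - 1)) :=
    (mul_pos hB (log_pos one_lt_two)).trans_le (mul_log_two_le_two_rpow_sub_Gamma hN hB.le)
  refine continuousAt_const.mul (ContinuousAt.sqrt (continuousAt_const.add ?_))
  exact (continuous_const.mul (continuous_const.sub (continuous_const.mul hrpow))).continuousAt.div
    hden.continuousAt (by positivity)

lemma dTerm_le {N : ℕ} (hN : 2 ≤ N) {B : ℝ} (hB : 0 < B) :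
    dTerm N B ≤ 1 / 2 * √(1 / N + 2 * |gammaGap (1 / (N - 1))| / (B * log 2) ^ 2) := by
  have hN' : (1 : ℝ) ≤ N - 1 := by linarith [(Nat.ofNat_le_cast (α := ℝ)).2 hN]
  have hnum : Gamma (1 + 2 / ((N : ℝ) - 1)) - Gamma (1 + 1 / ((N : ℝ) - 1)) ^ 2 *
      (1 + (2 : ℝ) ^ (-(B * N))) ^ (-(2 / ((N : ℝ) - 1))) ≤ |gammaGap (1 / (N - 1))| := by
    refine le_trans ?_ (le_abs_self _)
    rw [gammaGap, mul_one_div]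
    gcongr ?_ - _ * ?_
    refine rpow_le_rpow_of_nonpos (by positivity) ?_ (neg_nonpos.2 (by positivity))
    linarith [two_rpow_neg_le_one (by positivity : 0 ≤ B * N)]
  have hN_inv : 1 + 1 / (N : ℝ) ≤ 2 := by
    linarith [div_le_one_of_le₀ (by linarith : (1 : ℝ) ≤ N) (by positivity)]
  have := log_pos one_lt_two
  unfold dTerm
  gcongr 1 / 2 * √(_ + ?_ / ?_ ^ 2)
  · exact (mul_le_mul_of_nonneg_left hnum (by positivity)).trans (by gcongr)
  · exact mul_log_two_le_two_rpow_sub_Gamma hN hB.le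

lemma tendsto_log_mul_dTerm {c : ℝ} (hc : 0 < c) :
    Tendsto (fun N : ℕ => log N * dTerm N (c / log N)) atTop (nhds 0) := by
  have hgap : Tendsto (fun N : ℕ => log N ^ 4 * |gammaGap (1 / (N - 1))|) atTop (nhds 0) := by
    have hN : Tendsto (fun N : ℕ => (N : ℝ) + -1) atTop atTop :=
      tendsto_atTop_add_const_right _ _ tendsto_natCast_atTop_atTop
    have hlin : Tendsto (fun N : ℕ => ((N : ℝ) + -1) * (1 / (N - 1))) atTop (nhds 1) := by
      refine tendsto_const_nhds.congr' ?_
      filter_upwards [hN.eventually_ne_atTop 0] with N hN0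
      rw [mul_one_div, ← sub_eq_add_neg, div_self (by rwa [sub_eq_add_neg])]
    have hderiv := tendsto_mul_of_hasDerivAt_zero differentiableAt_gammaGap_zero.hasDerivAt
      gammaGap_zero hN hlin
    have hprod := ((tendsto_log_natCast_pow_div_add (-1) 4).mul hderiv).abs
    rw [zero_mul, abs_zero] at hprod
    refine hprod.congr' ?_
    filter_upwards [hN.eventually_ne_atTop 0] with N hN0
    rw [← mul_assoc, div_mul_cancel₀ _ hN0, abs_mul, abs_of_nonneg (by positivity)]
  have hupper : Tendsto (fun N : ℕ => 1 / 2 * √(log N ^ 2 / (N + 0) +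
      2 / (c * log 2) ^ 2 * (log N ^ 4 * |gammaGap (1 / (N - 1))|))) atTop (nhds 0) := by
    simpa [-one_div] using (((tendsto_log_natCast_pow_div_add 0 2).add
      (hgap.const_mul (2 / (c * log 2) ^ 2))).sqrt).const_mul (1 / 2)
  refine squeeze_zero' ?_ ?_ hupper
  · filter_upwards with N
    exact mul_nonneg (log_natCast_nonneg N) (dTerm_nonneg N _)
  · filter_upwards [eventually_ge_atTop 2] with N hN
    have hlog := log_natCast_pos hN
    calc log N * dTerm N (c / log N)
        ≤ log N * (1 / 2 * √(1 / N + 2 * |gammaGap (1 / (N - 1))| / (c / log N * log 2) ^ 2)) := by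
          gcongr
          exact dTerm_le hN (by positivity)
      _ = 1 / 2 * √(log N ^ 2 * (1 / N +
            2 * |gammaGap (1 / (N - 1))| / (c / log N * log 2) ^ 2)) := by
          rw [sqrt_mul (sq_nonneg _), sqrt_sq hlog.le]
          ring
      _ = _ := by
          congr 2
          field_simp
          ring

end Deficiency

section Existence

variable {ρ L μ : ℝ}

lemma capLB_le_idealRate (hρ : 0 < ρ) (hL : 0 < L) (N : ℕ) {p : ℝ × ℝ} (hp : p ∈ feasible μ L) :
    capLB ρ L μ N p ≤ idealRate ρ L μ N p := by
  rw [capLB_eq_mul_idealRate]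
  exact mul_le_of_le_one_left (idealRate_nonneg hρ hL N hp) (sub_le_self _ (dTerm_nonneg N p.2))

lemma upperSemicontinuousOn_capLB (hρ : 0 < ρ) (hL : 0 < L) {N : ℕ} (hN : 2 ≤ N) :
    UpperSemicontinuousOn (capLB ρ L μ N) (feasible μ L) := by
  intro p hp
  have hideal : ContinuousWithinAt (idealRate ρ L μ N) (feasible μ L) p :=
    (continuousOn_idealRate hρ N).mono (fun _ => nonneg_of_mem_feasible) p hp
  rcases hp.2.1.eq_or_lt with hB | hB
  · intro y hy
    rw [capLB_eq_mul_idealRate, idealRate_eq_zero N hB.symm, mul_zero,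
      ← idealRate_eq_zero (ρ := ρ) (L := L) (μ := μ) N hB.symm] at hy
    filter_upwards [hideal.eventually_lt_const hy, self_mem_nhdsWithin] with q hq hqmem
    exact (capLB_le_idealRate hρ hL N hqmem).trans_lt hq
  · have hd : ContinuousAt (fun q : ℝ × ℝ => dTerm N q.2) p :=
      (continuousAt_dTerm hN hB).comp continuousAt_snd
    rw [funext (capLB_eq_mul_idealRate N)]
    exact ((continuousAt_const.sub hd).continuousWithinAt.mul hideal).upperSemicontinuousWithinAt

lemma exists_isMaxOn_capLB (hρ : 0 < ρ) (hL : 0 < L) (hμ : 0 < μ) {N : ℕ} (hN : 2 ≤ N) :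
    ∃ p ∈ feasible μ L, IsMaxOn (capLB ρ L μ N) (feasible μ L) p :=
  (upperSemicontinuousOn_capLB hρ hL hN).exists_isMaxOn
    ⟨0, by simpa [feasible] using hL.le⟩ (isCompact_feasible hμ)

end Existence

section Excess

variable {ρ L μ : ℝ} {l : Filter ℕ} {p : ℕ → ℝ × ℝ} {z : ℝ × ℝ}

/-- The leading terms `log (ρ N) - 2 log log N` of the optimal rate. -/
noncomputable def benchmark (ρ : ℝ) (N : ℕ) : ℝ :=
  log (ρ * N) - 2 * log (log N)

/-- The ideal rate relative to `benchmark`, on the exponential scale, where it stays bounded. -/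
noncomputable def excessGain (ρ L μ : ℝ) (N : ℕ) (p : ℝ × ℝ) : ℝ :=
  exp (idealRate ρ L μ N p - benchmark ρ N)

/-- The argument of the logarithm in `idealRate`, in units of `exp (benchmark ρ N)`. -/
noncomputable def scaledSNR (ρ : ℝ) (N : ℕ) (p : ℝ × ℝ) : ℝ :=
  (1 + ρ * linkGain ρ p * N) / exp (benchmark ρ N)

/-- The limit of `excessGain ρ L μ N p` when `log N • p` tends to `z`. -/
noncomputable def limitGain (ρ L μ : ℝ) (z : ℝ × ℝ) : ℝ :=
  log 2 / ((1 + ρ⁻¹) * (1 + ρ)) * (z.1 * z.2) * exp (-((z.1 + μ * z.2) / L))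

lemma exp_benchmark (hρ : 0 < ρ) {N : ℕ} (hN : 2 ≤ N) :
    exp (benchmark ρ N) = ρ * N / log N ^ 2 := by
  have hlog := log_natCast_pos hN
  have : (0 : ℝ) < N := by positivity
  rw [benchmark, exp_sub, exp_log (by positivity), ← Nat.cast_ofNat (n := 2), exp_nat_mul,
    exp_log hlog]

lemma tendsto_benchmark_div_log (hρ : 0 < ρ) :
    Tendsto (fun N : ℕ => benchmark ρ N / log N) atTop (nhds 1) := by
  have hloglog : Tendsto (fun N : ℕ => log (log N) / log N) atTop (nhds 0) :=
    isLittleO_log_id_atTop.tendsto_div_nhds_zero.comp tendsto_log_natCast_atTop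
  have hρlog : Tendsto (fun N : ℕ => log ρ / log N) atTop (nhds 0) :=
    tendsto_const_nhds.div_atTop tendsto_log_natCast_atTop
  have hlim := (hρlog.add_const 1).sub (hloglog.const_mul 2)
  rw [zero_add, mul_zero, sub_zero] at hlim
  refine hlim.congr' ?_
  filter_upwards [eventually_ge_atTop 2] with N hN
  have hlog := log_natCast_pos hN
  rw [benchmark, log_mul hρ.ne' (by positivity)]
  field_simp

lemma scaledSNR_pos (hρ : 0 < ρ) (N : ℕ) {p : ℝ × ℝ} (hp : 0 ≤ p) : 0 < scaledSNR ρ N p :=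
  div_pos (one_pos.trans_le (one_le_one_add_linkGain hρ N hp)) (exp_pos _)

lemma scaledSNR_eq (hρ : 0 < ρ) {N : ℕ} (hN : 2 ≤ N) (p : ℝ × ℝ) :
    scaledSNR ρ N p = ρ⁻¹ * (log N ^ 2 / N) + log N ^ 2 * linkGain ρ p := by
  have hlog := log_natCast_pos hN
  rw [scaledSNR, exp_benchmark hρ hN]
  field_simp

lemma excessGain_eq (hρ : 0 < ρ) (hL : L ≠ 0) (N : ℕ) {p : ℝ × ℝ} (hp : 0 ≤ p) :
    excessGain ρ L μ N p = scaledSNR ρ N p ^ (1 - (p.1 + μ * p.2) / L) *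
      exp (-((p.1 + μ * p.2) / L * benchmark ρ N)) := by
  have hSNR := one_pos.trans_le (one_le_one_add_linkGain hρ N hp)
  have hw : (L - p.1 - μ * p.2) / L = 1 - (p.1 + μ * p.2) / L := by field_simp; ring
  rw [rpow_def_of_pos (scaledSNR_pos hρ N hp), scaledSNR, log_div hSNR.ne' (exp_pos _).ne',
    log_exp, ← exp_add, excessGain, idealRate, hw]
  ring_nf

lemma tendsto_scaledSNR (hρ : 0 < ρ) (hl : l ≤ atTop)
    (hpz : Tendsto (fun N : ℕ => log N • p N) l (nhds z)) :
    Tendsto (fun N => scaledSNR ρ N (p N)) l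
      (nhds (log 2 / ((1 + ρ⁻¹) * (1 + ρ)) * (z.1 * z.2))) := by
  have hlog := tendsto_log_natCast_atTop.mono_left hl
  have hfeedback : HasDerivAt (fun B : ℝ => 1 - (2 : ℝ) ^ (-B)) (log 2) 0 := by
    simpa using ((hasDerivAt_id (0 : ℝ)).neg.const_rpow two_pos).const_sub 1
  have hT := tendsto_mul_of_hasDerivAt_zero (hasDerivAt_trainingGain_zero hρ) trainingGain_zero
    hlog hpz.fst_nhds
  have hB := tendsto_mul_of_hasDerivAt_zero hfeedback (by simp) hlog hpz.snd_nhds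
  have hnoise := (tendsto_log_natCast_pow_div_add 0 2).mono_left hl |>.const_mul ρ⁻¹
  refine ((hnoise.add (hT.mul hB)).congr' ?_).trans_eq ?_
  · filter_upwards [hl (eventually_ge_atTop 2)] with N hN
    rw [scaledSNR_eq hρ hN, linkGain]
    ring
  · congr 1
    ring

lemma tendsto_excessGain (hρ : 0 < ρ) (hL : L ≠ 0) (hl : l ≤ atTop) (hp : ∀ᶠ N in l, 0 ≤ p N)
    (hpz : Tendsto (fun N : ℕ => log N • p N) l (nhds z)) :
    Tendsto (fun N => excessGain ρ L μ N (p N)) l (nhds (limitGain ρ L μ z)) := by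
  have hscaled : Tendsto (fun N : ℕ => log N * (((p N).1 + μ * (p N).2) / L)) l
      (nhds ((z.1 + μ * z.2) / L)) := by
    refine ((hpz.fst_nhds.add (hpz.snd_nhds.const_mul μ)).div_const L).congr fun N => ?_
    simp only [Prod.smul_fst, Prod.smul_snd, smul_eq_mul]
    ring
  have hcost := tendsto_zero_of_tendsto_mul (tendsto_log_natCast_atTop.mono_left hl) hscaled
  have hpow := (tendsto_scaledSNR hρ hl hpz).rpow (hcost.const_sub 1) (Or.inr (by simp))
  have hexp := (hscaled.mul ((tendsto_benchmark_div_log hρ).mono_left hl)).neg.rexp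
  rw [sub_zero, rpow_one] at hpow
  rw [mul_one] at hexp
  refine (hpow.mul hexp).congr' ?_
  filter_upwards [hp, hl (eventually_ge_atTop 2)] with N hpN hN
  have hlog := log_natCast_pos hN
  rw [excessGain_eq hρ hL N hpN]
  congr 3
  field_simp

lemma eventually_scaledSNR_le (hρ : 0 < ρ) (hμ : 0 < μ) :
    ∀ᶠ N : ℕ in atTop, ∀ p : ℝ × ℝ, 0 ≤ p →
      scaledSNR ρ N p ≤ 1 + ρ * log 2 / μ * (log N * (p.1 + μ * p.2)) ^ 2 := by
  have hnoise := (tendsto_log_natCast_pow_div_add 0 2).const_mul ρ⁻¹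
  rw [mul_zero] at hnoise
  filter_upwards [eventually_ge_atTop 2, hnoise.eventually_le_const one_pos] with N hN hN₁ p hp
  rw [scaledSNR_eq hρ hN]
  rw [add_zero] at hN₁
  refine add_le_add hN₁ ?_
  have hT : 0 ≤ p.1 := hp.1
  have hB : 0 ≤ p.2 := hp.2
  have := log_pos one_lt_two
  calc log N ^ 2 * linkGain ρ p ≤ log N ^ 2 * (ρ * log 2 * (p.1 * p.2)) := by
        gcongr
        exact linkGain_le hρ hp
    _ = ρ * log 2 / μ * (log N ^ 2 * (p.1 * (μ * p.2))) := by field_simp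
    _ ≤ ρ * log 2 / μ * (log N ^ 2 * (p.1 + μ * p.2) ^ 2) := by
        gcongr
        nlinarith [mul_nonneg hT (mul_nonneg hμ.le hB), sq_nonneg p.1, sq_nonneg (μ * p.2)]
    _ = _ := by rw [mul_pow]

lemma eventually_excessGain_le (hρ : 0 < ρ) (hL : 0 < L) (hμ : 0 < μ) :
    ∀ᶠ N : ℕ in atTop, ∀ p ∈ feasible μ L,
      excessGain ρ L μ N p ≤ (1 + ρ * log 2 / μ * (log N * (p.1 + μ * p.2)) ^ 2) *
        exp (-(log N * (p.1 + μ * p.2) / (2 * L))) := by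
  filter_upwards [eventually_ge_atTop 2, eventually_scaledSNR_le hρ hμ,
    (tendsto_benchmark_div_log hρ).eventually_const_le one_half_lt_one] with N hN hSNR hbench p hp
  have hp₀ := nonneg_of_mem_feasible hp
  have hcost : 0 ≤ p.1 + μ * p.2 := add_nonneg hp₀.1 (mul_nonneg hμ.le hp₀.2)
  have hcost₁ : (p.1 + μ * p.2) / L ≤ 1 := div_le_one_of_le₀ hp.2.2 hL.le
  have hlog := log_natCast_pos hN
  have hlog2 := log_pos one_lt_two
  rw [excessGain_eq hρ hL.ne' N hp₀]
  gcongr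
  · refine (rpow_le_rpow (scaledSNR_pos hρ N hp₀).le (hSNR p hp₀) (sub_nonneg.2 hcost₁)).trans ?_
    refine rpow_le_self_of_one_le (le_add_of_nonneg_right (by positivity)) ?_
    exact sub_le_self _ (by positivity)
  · rw [le_div_iff₀ hlog] at hbench
    calc log N * (p.1 + μ * p.2) / (2 * L) = (p.1 + μ * p.2) / L * (1 / 2 * log N) := by
          field_simp
      _ ≤ (p.1 + μ * p.2) / L * benchmark ρ N := by gcongr

lemma exists_eventually_log_smul_mem_feasible (hρ : 0 < ρ) (hL : 0 < L) (hμ : 0 < μ) {c : ℝ}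
    (hc : 0 < c) :
    ∃ S, ∀ᶠ N : ℕ in atTop, ∀ p ∈ feasible μ L, c ≤ excessGain ρ L μ N p →
      log N • p ∈ feasible μ S := by
  obtain ⟨S, hS⟩ := ((tendsto_one_add_mul_sq_mul_exp_neg_div (ρ * log 2 / μ)
    (by positivity : 0 < 2 * L)).eventually_lt_const hc).exists_forall_of_atTop
  refine ⟨S, ?_⟩
  filter_upwards [eventually_excessGain_le hρ hL hμ] with N hN p hp hcp
  have hlog := log_natCast_nonneg N
  refine ⟨mul_nonneg hlog hp.1, mul_nonneg hlog hp.2.1, ?_⟩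
  by_contra! hlt
  simp only [Prod.smul_fst, Prod.smul_snd, smul_eq_mul] at hlt
  exact (hcp.trans (hN p hp)).not_gt (hS _ (by linarith))

end Excess

section Optimum

variable {ρ L μ : ℝ}

lemma limitGain_eq (hL : L ≠ 0) (hμ : μ ≠ 0) (z : ℝ × ℝ) :
    limitGain ρ L μ z = log 2 / ((1 + ρ⁻¹) * (1 + ρ)) * (L ^ 2 / μ) *
      (z.1 / L * exp (-(z.1 / L)) * (μ * z.2 / L * exp (-(μ * z.2 / L)))) := by
  rw [limitGain, add_div, neg_add, exp_add]
  field_simp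

lemma limitGain_optimum (hL : L ≠ 0) (hμ : μ ≠ 0) :
    limitGain ρ L μ (L, L / μ) =
      log 2 / ((1 + ρ⁻¹) * (1 + ρ)) * (L ^ 2 / μ) * exp (-1) ^ 2 := by
  rw [limitGain_eq hL hμ]
  dsimp only
  rw [mul_div_cancel₀ L hμ, div_self hL]
  ring

lemma limitGain_optimum_pos (hρ : 0 < ρ) (hL : L ≠ 0) (hμ : 0 < μ) :
    0 < limitGain ρ L μ (L, L / μ) := by
  have := log_pos one_lt_two
  rw [limitGain_optimum hL hμ.ne']
  positivity

lemma log_limitGain_optimum (hρ : 0 < ρ) (hL : L ≠ 0) (hμ : 0 < μ) :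
    log (limitGain ρ L μ (L, L / μ)) =
      log (L ^ 2 * log 2) - log (μ * (1 + ρ⁻¹)) - 2 - log (1 + ρ) := by
  have := log_pos one_lt_two
  have : limitGain ρ L μ (L, L / μ) =
      L ^ 2 * log 2 / (μ * (1 + ρ⁻¹)) * exp (-2) / (1 + ρ) := by
    rw [limitGain_optimum hL hμ.ne', ← exp_nat_mul]
    norm_num
    field_simp
  rw [this, log_div (by positivity) (by positivity), log_mul (by positivity) (by positivity),
    log_div (by positivity) (by positivity), log_exp]
  ring

lemma eq_of_limitGain_optimum_le (hρ : 0 < ρ) (hL : 0 < L) (hμ : 0 < μ) {z : ℝ × ℝ} (hz : 0 ≤ z)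
    (h : limitGain ρ L μ (L, L / μ) ≤ limitGain ρ L μ z) : z = (L, L / μ) := by
  have hlog2 := log_pos one_lt_two
  rw [limitGain_optimum hL.ne' hμ.ne', limitGain_eq hL.ne' hμ.ne'] at h
  have h' := le_of_mul_le_mul_left h (by positivity)
  have hT : z.1 / L = 1 := eq_one_of_exp_neg_one_sq_le (div_nonneg hz.1 hL.le) h'
  have hB : μ * z.2 / L = 1 :=
    eq_one_of_exp_neg_one_sq_le (div_nonneg (mul_nonneg hμ.le hz.2) hL.le) (by rwa [mul_comm])
  rw [div_eq_one_iff_eq hL.ne'] at hT hB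
  exact Prod.ext hT (by rw [eq_div_iff hμ.ne', mul_comm, hB])

/-- The training and feedback lengths of the optimal growth order `1 / log N`; comparison with
them bounds the optimized rate from below. -/
noncomputable def nearOptimum (L μ : ℝ) (N : ℕ) : ℝ × ℝ :=
  (L / log N, L / μ / log N)

lemma eventually_nearOptimum_mem_feasible (hL : 0 < L) (hμ : 0 < μ) :
    ∀ᶠ N in atTop, nearOptimum L μ N ∈ feasible μ L := by
  filter_upwards [tendsto_log_natCast_atTop.eventually_ge_atTop 2] with N hN
  have hlog : 0 < log (N : ℝ) := by linarith
  refine ⟨by unfold nearOptimum; positivity, by unfold nearOptimum; positivity, ?_⟩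
  calc L / log N + μ * (L / μ / log N) = L * (2 / log N) := by field_simp; ring
    _ ≤ L := mul_le_of_le_one_right hL.le (div_le_one_of_le₀ hN hlog.le)

lemma tendsto_log_smul_nearOptimum :
    Tendsto (fun N : ℕ => log N • nearOptimum L μ N) atTop (nhds (L, L / μ)) := by
  refine tendsto_const_nhds.congr' ?_
  filter_upwards [tendsto_log_natCast_atTop.eventually_ne_atTop 0] with N hN
  ext <;> simp [nearOptimum, mul_div_cancel₀ _ hN]

lemma tendsto_idealRate_sub_benchmark (hρ : 0 < ρ) (hL : L ≠ 0) (hμ : 0 < μ) {p : ℕ → ℝ × ℝ}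
    (hp : ∀ᶠ N in atTop, 0 ≤ p N)
    (hpz : Tendsto (fun N : ℕ => log N • p N) atTop (nhds (L, L / μ))) :
    Tendsto (fun N => idealRate ρ L μ N (p N) - benchmark ρ N) atTop
      (nhds (log (limitGain ρ L μ (L, L / μ)))) := by
  simpa only [excessGain, log_exp] using
    (tendsto_excessGain hρ hL le_rfl hp hpz).log (limitGain_optimum_pos hρ hL hμ).ne'

lemma tendsto_capLB_nearOptimum_sub_benchmark (hρ : 0 < ρ) (hL : 0 < L) (hμ : 0 < μ) :
    Tendsto (fun N => capLB ρ L μ N (nearOptimum L μ N) - benchmark ρ N) atTop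
      (nhds (log (limitGain ρ L μ (L, L / μ)))) := by
  have hideal := tendsto_idealRate_sub_benchmark hρ hL.ne' hμ
    ((eventually_nearOptimum_mem_feasible hL hμ).mono fun _ => nonneg_of_mem_feasible)
    (tendsto_log_smul_nearOptimum (L := L) (μ := μ))
  have hgrowth := (hideal.div_atTop tendsto_log_natCast_atTop).add (tendsto_benchmark_div_log hρ)
  have hloss := (tendsto_log_mul_dTerm (div_pos hL hμ)).mul hgrowth
  refine ((hideal.sub hloss).congr' ?_).trans_eq (by simp)
  filter_upwards [tendsto_log_natCast_atTop.eventually_ne_atTop 0] with N hN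
  rw [capLB_eq_mul_idealRate, nearOptimum]
  field_simp
  ring

end Optimum

section Maximizers

variable {ρ L μ : ℝ} {sel : ℕ → ℝ × ℝ}

lemma tendsto_log_smul_maximizer (hρ : 0 < ρ) (hL : 0 < L) (hμ : 0 < μ)
    (hsel : ∀ᶠ N in atTop, sel N ∈ feasible μ L)
    (hle : ∀ᶠ N in atTop, capLB ρ L μ N (nearOptimum L μ N) ≤ capLB ρ L μ N (sel N)) :
    Tendsto (fun N : ℕ => log N • sel N) atTop (nhds (L, L / μ)) := by
  set J := limitGain ρ L μ (L, L / μ)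
  have hJ : 0 < J := limitGain_optimum_pos hρ hL.ne' hμ
  have hlower : Tendsto (fun N => exp (capLB ρ L μ N (nearOptimum L μ N) - benchmark ρ N)) atTop
      (nhds J) := by
    rw [← exp_log hJ]
    exact (tendsto_capLB_nearOptimum_sub_benchmark hρ hL hμ).rexp
  have hexcess : ∀ᶠ N in atTop,
      exp (capLB ρ L μ N (nearOptimum L μ N) - benchmark ρ N) ≤ excessGain ρ L μ N (sel N) := by
    filter_upwards [hsel, hle] with N hN hleN
    exact exp_le_exp.2 (sub_le_sub_right (hleN.trans (capLB_le_idealRate hρ hL N hN)) _)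
  obtain ⟨S, hS⟩ := exists_eventually_log_smul_mem_feasible hρ hL hμ (half_pos hJ)
  refine tendsto_nhds_of_unique_maximizer (isCompact_feasible (L := S) hμ) ?_
    (fun z hz => eq_of_limitGain_optimum_le hρ hL hμ (nonneg_of_mem_feasible hz))
    (fun U hU z _ hz => tendsto_excessGain hρ hL.ne' hU
      (hU (hsel.mono fun _ => nonneg_of_mem_feasible)) hz) hlower hexcess
  filter_upwards [hS, hsel, hexcess, hlower.eventually_const_le (half_lt_self hJ)]
    with N hSN hN hexcessN hJN
  exact hSN _ hN (hJN.trans hexcessN)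

lemma tendsto_capLB_maximizer_sub_benchmark (hρ : 0 < ρ) (hL : 0 < L) (hμ : 0 < μ)
    (hsel : ∀ᶠ N in atTop, sel N ∈ feasible μ L)
    (hle : ∀ᶠ N in atTop, capLB ρ L μ N (nearOptimum L μ N) ≤ capLB ρ L μ N (sel N)) :
    Tendsto (fun N => capLB ρ L μ N (sel N) - benchmark ρ N) atTop
      (nhds (log (limitGain ρ L μ (L, L / μ)))) := by
  refine tendsto_of_tendsto_of_tendsto_of_le_of_le'
    (tendsto_capLB_nearOptimum_sub_benchmark hρ hL hμ)
    (tendsto_idealRate_sub_benchmark hρ hL.ne' hμ (hsel.mono fun _ => nonneg_of_mem_feasible)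
      (tendsto_log_smul_maximizer hρ hL hμ hsel hle)) ?_ ?_
  · filter_upwards [hle] with N hleN using sub_le_sub_right hleN _
  · filter_upwards [hsel] with N hN using sub_le_sub_right (capLB_le_idealRate hρ hL N hN) _

end Maximizers

/-- Asymptotics of the optimized capacity lower bound (proof of Theorem 2): `G_{N_t}`
attains a maximum on the feasible set, any maximizers `(T̄°, B̄°)` satisfy
`T̄°·log N_t → L̄` and `B̄°·log N_t → L̄/μ`, and the maximum value `M(N_t)` satisfies
`M(N_t) − log(ρ N_t) + 2 log log N_t → log(L̄² log 2) − log(μ(1 + ρ⁻¹)) − 2 − log(1 + ρ)`. -/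
theorem optimized_capacity_lower_bound_asymptotics
    (ρ L μ : ℝ) (hρ : 0 < ρ) (hL : 0 < L) (hμ : 0 < μ) :
    (∀ Nt : ℕ, 2 ≤ Nt → ∃ p ∈ feasible μ L, IsMaxOn (capLB ρ L μ Nt) (feasible μ L) p) ∧
    (∀ sel : ℕ → ℝ × ℝ,
      (∀ Nt : ℕ, 2 ≤ Nt →
        sel Nt ∈ feasible μ L ∧ IsMaxOn (capLB ρ L μ Nt) (feasible μ L) (sel Nt)) →
      Tendsto (fun Nt : ℕ => (sel Nt).1 * Real.log (Nt : ℝ)) atTop (nhds L) ∧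
      Tendsto (fun Nt : ℕ => (sel Nt).2 * Real.log (Nt : ℝ)) atTop (nhds (L / μ)) ∧
      Tendsto (fun Nt : ℕ =>
          capLB ρ L μ Nt (sel Nt) - Real.log (ρ * (Nt : ℝ))
            + 2 * Real.log (Real.log (Nt : ℝ)))
        atTop
        (nhds (Real.log (L ^ 2 * Real.log 2) - Real.log (μ * (1 + ρ⁻¹)) - 2
          - Real.log (1 + ρ)))) := by
  refine ⟨fun _ => exists_isMaxOn_capLB hρ hL hμ, fun sel hsel => ?_⟩
  have hmem : ∀ᶠ N in atTop, sel N ∈ feasible μ L :=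
    eventually_atTop.2 ⟨2, fun N hN => (hsel N hN).1⟩
  have hle : ∀ᶠ N in atTop, capLB ρ L μ N (nearOptimum L μ N) ≤ capLB ρ L μ N (sel N) := by
    filter_upwards [eventually_ge_atTop 2, eventually_nearOptimum_mem_feasible hL hμ] with N hN hq
    exact (hsel N hN).2 hq
  have hscaled := tendsto_log_smul_maximizer hρ hL hμ hmem hle
  refine ⟨by simpa [mul_comm] using hscaled.fst_nhds,
    by simpa [mul_comm] using hscaled.snd_nhds, ?_⟩
  rw [← log_limitGain_optimum hρ hL.ne' hμ]
  refine (tendsto_capLB_maximizer_sub_benchmark hρ hL hμ hmem hle).congr fun N => ?_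
  rw [benchmark]
  ring
end

section
/- Beta function lower bound (eq. (59)): For every integer N_t ≥ 2 and every real B̄ ≥ 0, setting B = B̄·N_t and n = 2^B, n·Beta(n, 1 + 1/(N_t−1)) ≥ 2^{−B̄}·(1 − (2^{B̄} − 1 + γ + 2^{−B})/(N_t − 1)), where γ is the Euler–Mascheroni constant. -/
/-!
With `s = 1 / (N - 1)` and `n = a ^ N`, the quantity `n * Beta n (1 + s)` equals
`Γ (n + 1) * Γ (1 + s) / Γ (n + 1 + s)`. Log-convexity of `Γ` gives `exp (-(γ * s)) ≤ Γ (1 + s)`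
(tangent at `1`) and `Γ (x + s) ≤ x ^ s * Γ x` for `s ≤ 1` (chord over `[x, x + 1]`); the functional
equation, through `(x + s) / (1 + s) ≤ x` for `x ≥ 1`, carries their combination over to all
`s ≥ 0`. As `n + 1 ≤ n * exp (1 / n)`, this gives
`n ^ (-s) * exp (-((γ + 1 / n) * s)) ≤ n * Beta n (1 + s)`. Since `N * s = 1 + s`, the first factor
is `a⁻¹ * a ^ (-s)`, and the bound follows from `1 + t ≤ exp t`, used for both `t = a - 1` and the
total exponent.
-/

open Real Set

local notation "γ" => eulerMascheroniConstant

theorem add_mul_sub_le_of_convexOn_of_hasDerivAt {S : Set ℝ} {f : ℝ → ℝ} {f' x y : ℝ}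
    (hf : ConvexOn ℝ S f) (hx : x ∈ S) (hy : y ∈ S) (hf' : HasDerivAt f f' x) :
    f x + f' * (y - x) ≤ f y := by
  rcases lt_trichotomy x y with hxy | rfl | hyx
  · have h := hf.le_slope_of_hasDerivAt hx hy hxy hf'
    rw [slope_def_field, le_div_iff₀ (sub_pos.2 hxy)] at h
    linarith
  · simp
  · have h := hf.slope_le_of_hasDerivAt hy hx hyx hf'
    rw [slope_def_field, div_le_iff₀ (sub_pos.2 hyx)] at h
    linarith

theorem exp_neg_eulerMascheroniConstant_mul_le_Gamma_one_add {s : ℝ} (hs : -1 < s) :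
    exp (-(γ * s)) ≤ Gamma (1 + s) := by
  have hs' : 0 < 1 + s := by linarith
  have hderiv : HasDerivAt (log ∘ Gamma) (-γ) 1 := by
    simpa using (hasDerivAt_log (Gamma_pos_of_pos one_pos).ne').comp 1 hasDerivAt_Gamma_one
  have htangent := add_mul_sub_le_of_convexOn_of_hasDerivAt convexOn_log_Gamma
    (mem_Ioi.2 one_pos) (mem_Ioi.2 hs') hderiv
  simpa [← le_log_iff_exp_le (Gamma_pos_of_pos hs')] using htangent

theorem Gamma_add_le_rpow_mul_Gamma {x s : ℝ} (hx : 0 < x) (hs₀ : 0 ≤ s) (hs₁ : s ≤ 1) :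
    Gamma (x + s) ≤ x ^ s * Gamma x := by
  have hΓ := Gamma_pos_of_pos hx
  have hconv := convexOn_log_Gamma.2 (mem_Ioi.2 hx) (mem_Ioi.2 (by linarith : 0 < x + 1))
    (sub_nonneg.2 hs₁) hs₀ (sub_add_cancel 1 s)
  simp only [Function.comp_apply, smul_eq_mul] at hconv
  rw [show (1 - s) * x + s * (x + 1) = x + s by ring, Gamma_add_one hx.ne',
    log_mul hx.ne' hΓ.ne'] at hconv
  rw [← log_le_log_iff (Gamma_pos_of_pos (by positivity)) (by positivity),
    log_mul (by positivity) hΓ.ne', log_rpow hx]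
  linarith

theorem Gamma_add_le_exp_mul_rpow_mul_of_le_one {x s : ℝ} (hx : 0 < x) (hs₀ : 0 ≤ s) (hs₁ : s ≤ 1) :
    Gamma (x + s) ≤ (exp γ * x) ^ s * (Gamma x * Gamma (1 + s)) := by
  have hΓs : 1 ≤ exp (γ * s) * Gamma (1 + s) := by
    have h := exp_neg_eulerMascheroniConstant_mul_le_Gamma_one_add (by linarith : -1 < s)
    rwa [exp_neg, inv_le_iff_one_le_mul₀' (exp_pos _)] at h
  have := Gamma_pos_of_pos hx
  calc Gamma (x + s) ≤ x ^ s * Gamma x := Gamma_add_le_rpow_mul_Gamma hx hs₀ hs₁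
    _ ≤ x ^ s * Gamma x * (exp (γ * s) * Gamma (1 + s)) :=
      le_mul_of_one_le_right (by positivity) hΓs
    _ = (exp γ * x) ^ s * (Gamma x * Gamma (1 + s)) := by
      rw [mul_rpow (exp_pos _).le hx.le, ← exp_mul]
      ring

theorem Gamma_add_add_one_le_exp_mul_rpow_mul {x s : ℝ} (hx : 1 ≤ x) (hs : 0 ≤ s)
    (h : Gamma (x + s) ≤ (exp γ * x) ^ s * (Gamma x * Gamma (1 + s))) :
    Gamma (x + (s + 1)) ≤ (exp γ * x) ^ (s + 1) * (Gamma x * Gamma (1 + (s + 1))) := by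
  have hx₀ : 0 < x := by linarith
  have hγ : 1 ≤ exp γ := one_le_exp (by linarith [one_half_lt_eulerMascheroniConstant])
  have hfactor : x + s ≤ exp γ * x * (1 + s) :=
    calc x + s ≤ x * (1 + s) := by linarith [le_mul_of_one_le_left hs hx]
      _ ≤ exp γ * x * (1 + s) := by gcongr; exact le_mul_of_one_le_left hx₀.le hγ
  have := Gamma_nonneg_of_nonneg (by positivity : 0 ≤ x + s)
  calc Gamma (x + (s + 1)) = (x + s) * Gamma (x + s) := by
        rw [← add_assoc, Gamma_add_one (by positivity)]
    _ ≤ exp γ * x * (1 + s) * ((exp γ * x) ^ s * (Gamma x * Gamma (1 + s))) := by gcongr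
    _ = (exp γ * x) ^ (s + 1) * (Gamma x * Gamma (1 + (s + 1))) := by
        rw [rpow_add_one (by positivity), ← add_assoc, Gamma_add_one (by positivity)]
        ring

theorem Gamma_add_le_exp_mul_rpow_mul {x s : ℝ} (hx : 1 ≤ x) (hs : 0 ≤ s) :
    Gamma (x + s) ≤ (exp γ * x) ^ s * (Gamma x * Gamma (1 + s)) := by
  induction hk : ⌊s⌋₊ generalizing s with
  | zero =>
    exact Gamma_add_le_exp_mul_rpow_mul_of_le_one (by linarith) hs (Nat.floor_eq_zero.1 hk).le
  | succ k ih =>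
    obtain ⟨t, rfl⟩ : ∃ t, s = t + 1 := ⟨s - 1, by ring⟩
    have ht : 0 ≤ t := by linarith [Nat.floor_pos.1 (by lia : 0 < ⌊t + 1⌋₊)]
    rw [Nat.floor_add_one ht, Nat.succ_inj] at hk
    exact Gamma_add_add_one_le_exp_mul_rpow_mul hx ht (ih ht hk)

theorem Beta_eq_Gamma_mul_Gamma_div_Gamma {x y : ℝ} (hx : 0 < x) (hy : 0 < y) :
    Beta x y = Gamma x * Gamma y / Gamma (x + y) := by
  have hcomplex : Complex.betaIntegral x y = (Beta x y : ℂ) := by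
    rw [Complex.betaIntegral, Beta, ← intervalIntegral.integral_ofReal]
    refine intervalIntegral.integral_congr fun t ht ↦ ?_
    rw [uIcc_of_le zero_le_one] at ht
    simp [Complex.ofReal_cpow ht.1, Complex.ofReal_cpow (sub_nonneg.2 ht.2)]
  rw [← Complex.ofReal_re (Beta x y), ← hcomplex,
    ← ProbabilityTheory.beta_eq_betaIntegralReal x y hx hy, ProbabilityTheory.beta]

theorem mul_Beta_one_add {x s : ℝ} (hx : 0 < x) (hs : -1 < s) :
    x * Beta x (1 + s) = Gamma (x + 1) * Gamma (1 + s) / Gamma (x + 1 + s) := by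
  rw [Beta_eq_Gamma_mul_Gamma_div_Gamma hx (by linarith), Gamma_add_one hx.ne', ← add_assoc]
  ring

theorem rpow_neg_mul_exp_le_mul_Beta_one_add {x s : ℝ} (hx : 0 < x) (hs : 0 ≤ s) :
    x ^ (-s) * exp (-((γ + x⁻¹) * s)) ≤ x * Beta x (1 + s) := by
  have hadd_one : x + 1 ≤ x * exp x⁻¹ :=
    calc x + 1 = x * (x⁻¹ + 1) := by field_simp; ring
      _ ≤ x * exp x⁻¹ := by gcongr; exact add_one_le_exp _
  have : 0 < Gamma (x + 1) * Gamma (1 + s) :=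
    mul_pos (Gamma_pos_of_pos (by positivity)) (Gamma_pos_of_pos (by positivity))
  rw [mul_Beta_one_add hx (by linarith), le_div_iff₀ (Gamma_pos_of_pos (by positivity))]
  calc x ^ (-s) * exp (-((γ + x⁻¹) * s)) * Gamma (x + 1 + s)
      ≤ x ^ (-s) * exp (-((γ + x⁻¹) * s)) *
          ((exp γ * (x * exp x⁻¹)) ^ s * (Gamma (x + 1) * Gamma (1 + s))) := by
        gcongr
        refine (Gamma_add_le_exp_mul_rpow_mul (by linarith) hs).trans ?_
        gcongr
    _ = Gamma (x + 1) * Gamma (1 + s) := by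
        have hbase : exp γ * (x * exp x⁻¹) = x * exp (γ + x⁻¹) := by rw [exp_add]; ring
        rw [hbase, mul_rpow hx.le (exp_pos _).le, ← exp_mul, rpow_neg hx.le, exp_neg]
        field_simp

theorem beta_lower_bound_general {a N : ℝ} (ha : 0 < a) (hN : 1 < N) :
    a⁻¹ * (1 - (a - 1 + γ + (a ^ N)⁻¹) / (N - 1)) ≤ a ^ N * Beta (a ^ N) (1 + 1 / (N - 1)) := by
  have hN' : 0 < N - 1 := sub_pos.2 hN
  set s := 1 / (N - 1) with hs
  set n := a ^ N with hn
  have hs₀ : 0 ≤ s := by positivity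
  have hNs : N * -s = -1 + -s := by rw [hs]; field_simp; ring
  have ha_exp : exp (-((a - 1) * s)) ≤ a ^ (-s) := by
    rw [← mul_neg, exp_mul]
    exact rpow_le_rpow_of_nonpos ha (by simpa using add_one_le_exp (a - 1)) (neg_nonpos.2 hs₀)
  calc a⁻¹ * (1 - (a - 1 + γ + n⁻¹) / (N - 1))
      = a⁻¹ * (-((a - 1 + γ + n⁻¹) * s) + 1) := by rw [hs]; ring
    _ ≤ a⁻¹ * exp (-((a - 1 + γ + n⁻¹) * s)) := by gcongr; exact add_one_le_exp _
    _ = a⁻¹ * (exp (-((a - 1) * s)) * exp (-((γ + n⁻¹) * s))) := by rw [← exp_add]; ring_nf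
    _ ≤ a⁻¹ * (a ^ (-s) * exp (-((γ + n⁻¹) * s))) := by gcongr
    _ = n ^ (-s) * exp (-((γ + n⁻¹) * s)) := by
      rw [hn, ← rpow_mul ha.le, hNs, rpow_add ha, rpow_neg_one, mul_assoc]
    _ ≤ n * Beta n (1 + s) :=
      rpow_neg_mul_exp_le_mul_Beta_one_add (rpow_pos_of_pos ha N) hs₀

/-- Beta function lower bound (eq. (59)): for every integer `N_t ≥ 2` and every real `B̄ ≥ 0`,
setting `B = B̄·N_t` and `n = 2^B`,
`n·Beta(n, 1 + 1/(N_t−1)) ≥ 2^{−B̄}·(1 − (2^{B̄} − 1 + γ + 2^{−B})/(N_t − 1))`. -/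
theorem beta_lower_bound (Nt : ℕ) (hNt : 2 ≤ Nt) (Bbar : ℝ) (hB : 0 ≤ Bbar) :
    (2:ℝ) ^ (Bbar * (Nt : ℝ)) * Beta ((2:ℝ) ^ (Bbar * (Nt : ℝ))) (1 + 1 / ((Nt : ℝ) - 1)) ≥
      (2:ℝ) ^ (-Bbar) *
        (1 - ((2:ℝ) ^ Bbar - 1 + Real.eulerMascheroniConstant
              + (2:ℝ) ^ (-(Bbar * (Nt : ℝ)))) / ((Nt : ℝ) - 1)) := by
  have h := beta_lower_bound_general (rpow_pos_of_pos two_pos Bbar) (Nat.one_lt_cast.2 hNt)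
  simpa only [rpow_mul zero_le_two, rpow_neg zero_le_two] using h
end
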